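/- Let y and y + h both be admissible sources (h measurable and bounded), fix d₀ ∈ [0, ω₀], and let ω_y and ω_{y+h} be the solutions of the damage integral equation with sources y and y + h respectively. Then there exists a unique continuous function w : [0,T] → ℝ satisfying the linearized integral equation w(t) = ∫₀ᵗ [ (1 − ω_y(ξ))^{−α} h(ξ) + α(1 − ω_y(ξ))^{−(α+1)} y(ξ) w(ξ) ] dξ for all t ∈ [0,T], and there is a constant C > 0 depending only on T, α, ω₀ and ω₁ such that max_{t∈[0,T]} |ω_{y+h}(t) − ω_y(t) − w(t)| ≤ C·( ess sup_{t∈[0,T]} |h(t)| )². In particular the solution map y ↦ ω_y is Fréchet differentiable with respect to the supremum norm and its derivative at y in direction h is w. -/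

import Mathlib

open MeasureTheory Set

/-- `y` is an admissible source: measurable, and `0 ≤ y ≤ T⁻¹(ω₁ − ω₀)(1 − ω₁)^α`
a.e. on `[0, T]`. -/
def AdmissibleSource (T a w0 w1 : ℝ) (y : ℝ → ℝ) : Prop :=
  Measurable y ∧
    ∀ᵐ t ∂(volume.restrict (Icc (0 : ℝ) T)),
      0 ≤ y t ∧ y t ≤ T⁻¹ * (w1 - w0) * (1 - w1) ^ a

/-- `ω` is a continuous solution of the damage integral equation
`ω(t) = d₀ + ∫₀ᵗ (1 − ω(ξ))^(−α) y(ξ) dξ` on `[0, T]`, with values in `[0, ω₁]`. -/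
def SolvesDamage (T a w1 d0 : ℝ) (y ω : ℝ → ℝ) : Prop :=
  ContinuousOn ω (Icc (0 : ℝ) T) ∧
  (∀ t ∈ Icc (0 : ℝ) T, ω t ∈ Icc (0 : ℝ) w1) ∧
  (∀ t ∈ Icc (0 : ℝ) T, ω t = d0 + ∫ ξ in (0 : ℝ)..t, (1 - ω ξ) ^ (-a) * y ξ)

/-!
The equation `ω' = (1 - ω)^(-α) y` is separable: with `f x = (1 - x)^(-α)` and
`H t = ∫₀ᵗ h`, the travel time `∫ dx / f x` from `ω_y t` to `ω_{y+h} t` is exactly `H t`.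
The linearized equation `w' = f(ω_y) h + f'(ω_y) y w` has integrating factor `1 / f(ω_y)`, so its
only solution is `w = f(ω_y) H`. The remainder is therefore `q - p - f p * ∫ x in p..q, (f x)⁻¹`
with `p = ω_y t` and `q = ω_{y+h} t`, which is quadratic in the travel time by the mean value
theorem for integrals. As the sources are only measurable, the calculus is that of absolutely
continuous functions.
-/

theorem absolutelyContinuousOnInterval_of_dist_le {X Y : Type*} [PseudoMetricSpace X]
    [PseudoMetricSpace Y] {a b : ℝ} {f : ℝ → X} {g : ℝ → Y} (K : ℝ)
    (hg : AbsolutelyContinuousOnInterval g a b)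
    (hfg : ∀ s ∈ uIcc a b, ∀ t ∈ uIcc a b, dist (f s) (f t) ≤ K * dist (g s) (g t)) :
    AbsolutelyContinuousOnInterval f a b := by
  have hlim := Filter.Tendsto.const_mul K hg
  rw [mul_zero] at hlim
  refine squeeze_zero' (.of_forall fun E => Finset.sum_nonneg fun _ _ => dist_nonneg) ?_ hlim
  rw [Filter.eventually_inf_principal]
  filter_upwards with E hE
  rw [Finset.mul_sum]
  exact Finset.sum_le_sum fun i hi => hfg _ (hE.1 i hi).1 _ (hE.1 i hi).2

theorem exists_hasDerivAt_of_continuousOn_uIcc {E : Type*} [NormedAddCommGroup E] [NormedSpace ℝ E]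
    [CompleteSpace E] {a b : ℝ} {g : ℝ → E} (hg : ContinuousOn g (uIcc a b)) :
    ∃ G : ℝ → E, ∀ x ∈ uIcc a b, HasDerivAt G (g x) x := by
  have hext : Continuous (IccExtend min_le_max ((uIcc a b).domRestrict g)) :=
    hg.domRestrict.Icc_extend'
  refine ⟨fun x => ∫ s in a..x, IccExtend min_le_max ((uIcc a b).domRestrict g) s,
    fun x hx => ?_⟩
  exact (hext.integral_hasStrictDerivAt a x).hasDerivAt.congr_deriv
    (IccExtend_of_mem min_le_max ((uIcc a b).domRestrict g) hx)

/-- `u` is an indefinite Lebesgue integral of `g` on the interval between `a` and `b`. It is encoded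
as absolute continuity together with `u' = g` almost everywhere, so that the rules of calculus
reduce to their pointwise versions. -/
structure IsIndefiniteIntegral (u g : ℝ → ℝ) (a b : ℝ) : Prop where
  absolutelyContinuous : AbsolutelyContinuousOnInterval u a b
  ae_hasDerivAt : ∀ᵐ x, x ∈ uIcc a b → HasDerivAt u (g x) x

namespace IsIndefiniteIntegral

variable {u v g k F F' : ℝ → ℝ} {S : Set ℝ} {a b c t : ℝ}

theorem of_eq_add_integral (hg : IntervalIntegrable g volume a b)
    (hu : ∀ t ∈ uIcc a b, u t = c + ∫ ξ in a..t, g ξ) : IsIndefiniteIntegral u g a b where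
  absolutelyContinuous :=
    absolutelyContinuousOnInterval_of_dist_le 1
      (hg.absolutelyContinuousOnInterval_intervalIntegral left_mem_uIcc) fun s hs t ht => by
        rw [hu s hs, hu t ht, dist_add_left, one_mul]
  ae_hasDerivAt := by
    filter_upwards [hg.ae_hasDerivAt_integral, Measure.ae_ne volume (min a b),
      Measure.ae_ne volume (max a b)] with x hx hmin hmax hxab
    have hnhds : uIcc a b ∈ nhds x :=
      Icc_mem_nhds (hxab.1.lt_of_ne' hmin) (hxab.2.lt_of_ne hmax)
    refine ((hx hxab a left_mem_uIcc).const_add c).congr_of_eventuallyEq ?_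
    filter_upwards [hnhds] with z hz using hu z hz

theorem continuousOn (hu : IsIndefiniteIntegral u g a b) : ContinuousOn u (uIcc a b) :=
  hu.absolutelyContinuous.continuousOn

theorem integral_eq_sub (hu : IsIndefiniteIntegral u g a b) (ht : t ∈ uIcc a b) :
    ∫ ξ in a..t, g ξ = u t - u a := by
  have hsub : uIcc a t ⊆ uIcc a b := uIcc_subset_uIcc_left ht
  rw [← (hu.absolutelyContinuous.mono hsub).integral_deriv_eq_sub]
  refine intervalIntegral.integral_congr_ae ?_
  filter_upwards [hu.ae_hasDerivAt] with x hx hxt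
  exact (hx (hsub (uIoc_subset_uIcc hxt))).deriv.symm

theorem congr_density (hu : IsIndefiniteIntegral u g a b) (hgk : EqOn g k (uIcc a b)) :
    IsIndefiniteIntegral u k a b where
  absolutelyContinuous := hu.absolutelyContinuous
  ae_hasDerivAt := by
    filter_upwards [hu.ae_hasDerivAt] with x hx hxab
    exact hgk hxab ▸ hx hxab

theorem mul (hu : IsIndefiniteIntegral u g a b) (hv : IsIndefiniteIntegral v k a b) :
    IsIndefiniteIntegral (fun x => u x * v x) (fun x => g x * v x + u x * k x) a b where
  absolutelyContinuous := hu.absolutelyContinuous.fun_mul hv.absolutelyContinuous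
  ae_hasDerivAt := by
    filter_upwards [hu.ae_hasDerivAt, hv.ae_hasDerivAt] with x hux hvx hxab
    exact (hux hxab).fun_mul (hvx hxab)

theorem comp (hu : IsIndefiniteIntegral u g a b) (huS : MapsTo u (uIcc a b) S)
    (hF : ∀ x ∈ S, HasDerivAt F (F' x) x) (hF' : ContinuousOn F' S) :
    IsIndefiniteIntegral (fun x => F (u x)) (fun x => F' (u x) * g x) a b where
  absolutelyContinuous := by
    obtain ⟨K, hK⟩ := isCompact_uIcc.exists_bound_of_continuousOn
      (hF'.comp hu.continuousOn huS)
    have hconvex : Convex ℝ (u '' uIcc a b) :=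
      (isPreconnected_uIcc.image u hu.continuousOn).ordConnected.convex
    refine absolutelyContinuousOnInterval_of_dist_le K hu.absolutelyContinuous fun s hs t ht => ?_
    simp only [dist_eq_norm]
    refine hconvex.norm_image_sub_le_of_norm_hasDerivWithin_le (f' := F') ?_ ?_
      (mem_image_of_mem u ht) (mem_image_of_mem u hs)
    · rintro _ ⟨x, hx, rfl⟩
      exact (hF (u x) (huS hx)).hasDerivWithinAt
    · rintro _ ⟨x, hx, rfl⟩
      exact hK x hx
  ae_hasDerivAt := by
    filter_upwards [hu.ae_hasDerivAt] with x hx hxab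
    exact (hF (u x) (huS hxab)).comp x (hx hxab)

theorem integral_comp_mul (hu : IsIndefiniteIntegral u g a b)
    (hF : ContinuousOn F (u '' uIcc a b)) (ht : t ∈ uIcc a b) :
    ∫ ξ in a..t, F (u ξ) * g ξ = ∫ x in u a..u t, F x := by
  have hsub : uIcc (u a) (u t) ⊆ u '' uIcc a b :=
    (isPreconnected_uIcc.image u hu.continuousOn).ordConnected.uIcc_subset
      (mem_image_of_mem u left_mem_uIcc) (mem_image_of_mem u ht)
  obtain ⟨G, hG⟩ : ∃ G : ℝ → ℝ, ∀ x ∈ u '' uIcc a b, HasDerivAt G (F x) x := by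
    rw [hu.continuousOn.image_uIcc] at hF ⊢
    exact exists_hasDerivAt_of_continuousOn_uIcc hF
  rw [(hu.comp (mapsTo_image u _) hG hF).integral_eq_sub ht,
    intervalIntegral.integral_eq_sub_of_hasDerivAt (fun x hx => hG x (hsub hx))
      (hF.mono hsub).intervalIntegrable]

end IsIndefiniteIntegral

section SeparableEquation

variable {f f' u v w y h : ℝ → ℝ} {S : Set ℝ} {a b t : ℝ}

theorem integral_inv_eq_integral_source
    (hu : IsIndefiniteIntegral u (fun ξ => f (u ξ) * y ξ) a b) (huS : MapsTo u (uIcc a b) S)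
    (hf : ContinuousOn f S) (hf0 : ∀ x ∈ S, f x ≠ 0) (ht : t ∈ uIcc a b) :
    ∫ x in u a..u t, (f x)⁻¹ = ∫ ξ in a..t, y ξ := by
  rw [← hu.integral_comp_mul ((hf.fun_inv₀ hf0).mono huS.image_subset) ht]
  refine intervalIntegral.integral_congr fun ξ hξ => ?_
  exact inv_mul_cancel_left₀ (hf0 _ (huS (uIcc_subset_uIcc_left ht hξ))) _

theorem integral_inv_eq_integral_perturbation
    (hu : IsIndefiniteIntegral u (fun ξ => f (u ξ) * y ξ) a b) (huS : MapsTo u (uIcc a b) S)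
    (hv : IsIndefiniteIntegral v (fun ξ => f (v ξ) * (y ξ + h ξ)) a b)
    (hvS : MapsTo v (uIcc a b) S) (huv : u a = v a) (hS : S.OrdConnected)
    (hf : ContinuousOn f S) (hf0 : ∀ x ∈ S, f x ≠ 0)
    (hy : IntervalIntegrable y volume a b) (hh : IntervalIntegrable h volume a b)
    (ht : t ∈ uIcc a b) :
    ∫ x in u t..v t, (f x)⁻¹ = ∫ ξ in a..t, h ξ := by
  have hsub : uIcc a t ⊆ uIcc a b := uIcc_subset_uIcc_left ht
  have hinv : ∀ p ∈ S, ∀ q ∈ S, IntervalIntegrable (fun x => (f x)⁻¹) volume p q :=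
    fun p hp q hq => ((hf.fun_inv₀ hf0).mono (hS.uIcc_subset hp hq)).intervalIntegrable
  have hua : u a ∈ S := huS left_mem_uIcc
  calc ∫ x in u t..v t, (f x)⁻¹
      = (∫ x in v a..v t, (f x)⁻¹) - ∫ x in u a..u t, (f x)⁻¹ := by
        rw [← huv, intervalIntegral.integral_interval_sub_left (hinv _ hua _ (hvS ht))
          (hinv _ hua _ (huS ht))]
    _ = (∫ ξ in a..t, (y ξ + h ξ)) - ∫ ξ in a..t, y ξ := by
        rw [integral_inv_eq_integral_source hu huS hf hf0 ht,
          integral_inv_eq_integral_source hv hvS hf hf0 ht]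
    _ = ∫ ξ in a..t, h ξ := by
        rw [intervalIntegral.integral_add (hy.mono_set hsub) (hh.mono_set hsub),
          add_sub_cancel_left]

theorem isIndefiniteIntegral_linearization
    (hu : IsIndefiniteIntegral u (fun ξ => f (u ξ) * y ξ) a b) (huS : MapsTo u (uIcc a b) S)
    (hf : ∀ x ∈ S, HasDerivAt f (f' x) x) (hf' : ContinuousOn f' S)
    (hh : IntervalIntegrable h volume a b) :
    IsIndefiniteIntegral (fun t => (∫ ξ in a..t, h ξ) * f (u t))
      (fun t => f (u t) * h t + f' (u t) * y t * ((∫ ξ in a..t, h ξ) * f (u t))) a b := by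
  have hH : IsIndefiniteIntegral (fun t => ∫ ξ in a..t, h ξ) h a b :=
    .of_eq_add_integral hh fun t _ => (zero_add _).symm
  refine (hH.mul (hu.comp huS hf hf')).congr_density fun t _ => ?_
  ring

theorem isIndefiniteIntegral_linearization_div
    (hu : IsIndefiniteIntegral u (fun ξ => f (u ξ) * y ξ) a b) (huS : MapsTo u (uIcc a b) S)
    (hf : ∀ x ∈ S, HasDerivAt f (f' x) x) (hf' : ContinuousOn f' S) (hf0 : ∀ x ∈ S, f x ≠ 0)
    (hw : IsIndefiniteIntegral w (fun ξ => f (u ξ) * h ξ + f' (u ξ) * y ξ * w ξ) a b) :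
    IsIndefiniteIntegral (fun t => w t * (f (u t))⁻¹) h a b := by
  have hfc : ContinuousOn f S := fun x hx => (hf x hx).continuousAt.continuousWithinAt
  have hinv := hu.comp huS (fun x hx => (hf x hx).fun_inv (hf0 x hx))
    (hf'.neg.div (hfc.pow 2) fun x hx => pow_ne_zero 2 (hf0 x hx))
  refine (hw.mul hinv).congr_density fun t ht => ?_
  have hft : f (u t) ≠ 0 := hf0 _ (huS ht)
  simp only
  field_simp
  ring

theorem linearization_eq_integral_mul
    (hu : IsIndefiniteIntegral u (fun ξ => f (u ξ) * y ξ) a b) (huS : MapsTo u (uIcc a b) S)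
    (hf : ∀ x ∈ S, HasDerivAt f (f' x) x) (hf' : ContinuousOn f' S) (hf0 : ∀ x ∈ S, f x ≠ 0)
    (hw : IsIndefiniteIntegral w (fun ξ => f (u ξ) * h ξ + f' (u ξ) * y ξ * w ξ) a b)
    (hwa : w a = 0) (ht : t ∈ uIcc a b) :
    w t = (∫ ξ in a..t, h ξ) * f (u t) := by
  rw [(isIndefiniteIntegral_linearization_div hu huS hf hf' hf0 hw).integral_eq_sub ht, hwa,
    zero_mul, sub_zero, inv_mul_cancel_right₀ (hf0 _ (huS ht))]

end SeparableEquation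

section TravelTime

variable {f f' : ℝ → ℝ} {p q L B lo hi : ℝ}

theorem abs_sub_sub_mul_integral_inv_le (hf : ContinuousOn f (uIcc p q))
    (hf0 : ∀ x ∈ uIcc p q, f x ≠ 0) (hL : ∀ x ∈ uIcc p q, |f x - f p| ≤ L * |x - p|)
    (hB : ∀ x ∈ uIcc p q, |f x| ≤ B) :
    |q - p - f p * ∫ x in p..q, (f x)⁻¹| ≤ L * B * (∫ x in p..q, (f x)⁻¹) ^ 2 := by
  rcases eq_or_ne p q with rfl | hpq
  · simp
  have hL0 : 0 ≤ L := nonneg_of_mul_nonneg_left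
    ((abs_nonneg _).trans (hL q right_mem_uIcc)) (abs_pos.2 (sub_ne_zero.2 hpq.symm))
  set τ := ∫ x in p..q, (f x)⁻¹ with hτ
  obtain ⟨c, hc, hmean⟩ := exists_eq_interval_average hpq (hf.fun_inv₀ hf0)
  replace hc : c ∈ uIcc p q := uIoo_subset_uIcc_self hc
  have hqp : q - p = f c * τ := by
    rw [interval_average_eq_div, ← hτ] at hmean
    have hfc := hf0 c hc
    have hne : q - p ≠ 0 := sub_ne_zero.2 hpq.symm
    field_simp at hmean
    exact hmean
  calc |q - p - f p * τ| = |f c - f p| * |τ| := by rw [hqp, ← sub_mul, abs_mul]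
    _ ≤ L * |q - p| * |τ| := by
        gcongr
        exact (hL c hc).trans (by gcongr L * ?_; exact abs_sub_left_of_mem_uIcc hc)
    _ = L * |f c| * |τ| ^ 2 := by rw [hqp, abs_mul]; ring
    _ ≤ L * B * τ ^ 2 := by rw [sq_abs]; gcongr; exact hB c hc

theorem exists_forall_abs_sub_sub_mul_integral_inv_le
    (hf : ∀ x ∈ Icc lo hi, HasDerivAt f (f' x) x) (hf' : ContinuousOn f' (Icc lo hi))
    (hf0 : ∀ x ∈ Icc lo hi, f x ≠ 0) :
    ∃ C > 0, ∀ p ∈ Icc lo hi, ∀ q ∈ Icc lo hi,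
      |q - p - f p * ∫ x in p..q, (f x)⁻¹| ≤ C * (∫ x in p..q, (f x)⁻¹) ^ 2 := by
  have hfc : ContinuousOn f (Icc lo hi) := fun x hx => (hf x hx).continuousAt.continuousWithinAt
  obtain ⟨L, hL⟩ := isCompact_Icc.exists_bound_of_continuousOn hf'
  obtain ⟨B, hB⟩ := isCompact_Icc.exists_bound_of_continuousOn hfc
  refine ⟨max L 1 * max B 1, by positivity, fun p hp q hq => ?_⟩
  have hsub : uIcc p q ⊆ Icc lo hi := uIcc_subset_Icc hp hq
  refine abs_sub_sub_mul_integral_inv_le (hfc.mono hsub) (fun x hx => hf0 x (hsub hx))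
    (fun x hx => ?_) fun x hx => (hB x (hsub hx)).trans (le_max_left B 1)
  exact (convex_Icc lo hi).norm_image_sub_le_of_norm_hasDerivWithin_le
    (fun x hx => (hf x hx).hasDerivWithinAt) (fun x hx => (hL x hx).trans (le_max_left L 1))
    hp (hsub hx)

end TravelTime

theorem abs_integral_le_essSup_mul {h : ℝ → ℝ} {a b t : ℝ}
    (hh : MemLp h ⊤ (volume.restrict (Icc a b))) (ht : t ∈ Icc a b) :
    |∫ ξ in a..t, h ξ| ≤ essSup (fun ξ => |h ξ|) (volume.restrict (Icc a b)) * (t - a) := by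
  have hbound : ∀ᵐ ξ ∂volume.restrict (Icc a b),
      ‖h ξ‖ ≤ essSup (fun ξ => |h ξ|) (volume.restrict (Icc a b)) :=
    ae_le_essSup ⟨_, ae_le_lpNorm_exponent_top hh⟩
  rw [ae_restrict_iff' measurableSet_Icc] at hbound
  rw [← abs_of_nonneg (sub_nonneg.2 ht.1), ← Real.norm_eq_abs (∫ ξ in a..t, h ξ)]
  refine intervalIntegral.norm_integral_le_of_norm_le_const_ae ?_
  filter_upwards [hbound] with ξ hξ hξt
  rw [uIoc_of_le ht.1] at hξt
  exact hξ ⟨hξt.1.le, hξt.2.trans ht.2⟩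

section Damage

variable {T a w0 w1 d0 t : ℝ} {y h ω ωh w : ℝ → ℝ}

theorem hasDerivAt_one_sub_rpow {x : ℝ} (hx : x < 1) (p : ℝ) :
    HasDerivAt (fun x : ℝ => (1 - x) ^ (-p)) (p * (1 - x) ^ (-(p + 1))) x := by
  refine (((hasDerivAt_id x).const_sub 1).rpow_const (p := -p)
    (Or.inl (sub_pos.2 hx).ne')).congr_deriv ?_
  rw [show -p - 1 = -(p + 1) by ring, id]
  ring

theorem continuousOn_one_sub_rpow (p : ℝ) :
    ContinuousOn (fun x : ℝ => (1 - x) ^ p) (Iio 1) :=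
  (continuousOn_const.sub continuousOn_id).rpow_const fun _ hx => Or.inl (sub_pos.2 hx).ne'

theorem continuousOn_deriv_one_sub_rpow (p : ℝ) :
    ContinuousOn (fun x : ℝ => p * (1 - x) ^ (-(p + 1))) (Iio 1) :=
  continuousOn_const.mul (continuousOn_one_sub_rpow _)

theorem one_sub_rpow_ne_zero {x : ℝ} (hx : x < 1) (p : ℝ) : (1 - x) ^ p ≠ 0 :=
  (Real.rpow_pos_of_pos (sub_pos.2 hx) p).ne'

/-- `w` is a continuous solution on `[0, T]` of the damage equation linearized at `ω`, with
source `y`, in the direction `h`. -/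
def SolvesLinearizedDamage (T a : ℝ) (y h ω w : ℝ → ℝ) : Prop :=
  ContinuousOn w (Icc 0 T) ∧
    ∀ t ∈ Icc 0 T, w t = ∫ ξ in (0 : ℝ)..t,
      ((1 - ω ξ) ^ (-a) * h ξ + a * (1 - ω ξ) ^ (-(a + 1)) * y ξ * w ξ)

theorem AdmissibleSource.memLp_top (hy : AdmissibleSource T a w0 w1 y) :
    MemLp y ⊤ (volume.restrict (Icc 0 T)) := by
  refine memLp_top_of_bound hy.1.aestronglyMeasurable (T⁻¹ * (w1 - w0) * (1 - w1) ^ a) ?_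
  filter_upwards [hy.2] with t ht
  rw [Real.norm_of_nonneg ht.1]
  exact ht.2

theorem intervalIntegrable_of_memLp_top (hT : 0 ≤ T)
    (hy : MemLp y ⊤ (volume.restrict (Icc 0 T))) : IntervalIntegrable y volume 0 T :=
  (intervalIntegrable_iff_integrableOn_Icc_of_le hT).2 (hy.integrable le_top)

namespace SolvesDamage

theorem mapsTo_Iio (hω : SolvesDamage T a w1 d0 y ω) (hT : 0 ≤ T) (hw1 : w1 < 1) :
    MapsTo ω (uIcc 0 T) (Iio 1) :=
  fun t ht => (hω.2.1 t (uIcc_of_le hT ▸ ht)).2.trans_lt hw1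

theorem apply_zero (hω : SolvesDamage T a w1 d0 y ω) (hT : 0 ≤ T) : ω 0 = d0 := by
  rw [hω.2.2 0 (left_mem_Icc.2 hT), intervalIntegral.integral_same, add_zero]

theorem isIndefiniteIntegral (hω : SolvesDamage T a w1 d0 y ω) (hT : 0 ≤ T) (hw1 : w1 < 1)
    (hy : IntervalIntegrable y volume 0 T) :
    IsIndefiniteIntegral ω (fun ξ => (1 - ω ξ) ^ (-a) * y ξ) 0 T := by
  have hrate : ContinuousOn (fun ξ => (1 - ω ξ) ^ (-a)) (uIcc 0 T) :=
    (continuousOn_one_sub_rpow (-a)).comp (uIcc_of_le hT ▸ hω.1) (hω.mapsTo_Iio hT hw1)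
  exact .of_eq_add_integral (hy.continuousOn_mul hrate) (uIcc_of_le hT ▸ hω.2.2)

theorem solvesLinearizedDamage (hω : SolvesDamage T a w1 d0 y ω) (hT : 0 ≤ T) (hw1 : w1 < 1)
    (hy : IntervalIntegrable y volume 0 T) (hh : IntervalIntegrable h volume 0 T) :
    SolvesLinearizedDamage T a y h ω (fun t => (∫ ξ in (0 : ℝ)..t, h ξ) * (1 - ω t) ^ (-a)) := by
  have hw := isIndefiniteIntegral_linearization (hω.isIndefiniteIntegral hT hw1 hy)
    (hω.mapsTo_Iio hT hw1) (fun x hx => hasDerivAt_one_sub_rpow hx a)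
    (continuousOn_deriv_one_sub_rpow a) hh
  refine ⟨uIcc_of_le hT ▸ hw.continuousOn, fun t ht => ?_⟩
  rw [hw.integral_eq_sub (uIcc_of_le hT ▸ ht), intervalIntegral.integral_same, zero_mul, sub_zero]

theorem integral_inv_eq (hω : SolvesDamage T a w1 d0 y ω)
    (hωh : SolvesDamage T a w1 d0 (fun t => y t + h t) ωh) (hT : 0 ≤ T) (hw1 : w1 < 1)
    (hy : IntervalIntegrable y volume 0 T) (hh : IntervalIntegrable h volume 0 T)
    (ht : t ∈ Icc 0 T) :
    ∫ x in ω t..ωh t, ((1 - x) ^ (-a))⁻¹ = ∫ ξ in (0 : ℝ)..t, h ξ :=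
  integral_inv_eq_integral_perturbation (f := fun x => (1 - x) ^ (-a))
    (hω.isIndefiniteIntegral hT hw1 hy) (hω.mapsTo_Iio hT hw1)
    (hωh.isIndefiniteIntegral hT hw1 (hy.add hh)) (hωh.mapsTo_Iio hT hw1)
    ((hω.apply_zero hT).trans (hωh.apply_zero hT).symm) ordConnected_Iio
    (continuousOn_one_sub_rpow (-a)) (fun _ hx => one_sub_rpow_ne_zero hx (-a)) hy hh
    (uIcc_of_le hT ▸ ht)

end SolvesDamage

theorem SolvesLinearizedDamage.isIndefiniteIntegral (hw : SolvesLinearizedDamage T a y h ω w)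
    (hω : SolvesDamage T a w1 d0 y ω) (hT : 0 ≤ T) (hw1 : w1 < 1)
    (hy : IntervalIntegrable y volume 0 T) (hh : IntervalIntegrable h volume 0 T) :
    IsIndefiniteIntegral w
      (fun ξ => (1 - ω ξ) ^ (-a) * h ξ + a * (1 - ω ξ) ^ (-(a + 1)) * y ξ * w ξ) 0 T := by
  have hωc : ContinuousOn ω (uIcc 0 T) := uIcc_of_le hT ▸ hω.1
  have hwc : ContinuousOn w (uIcc 0 T) := uIcc_of_le hT ▸ hw.1
  have hrate := (continuousOn_one_sub_rpow (-a)).comp hωc (hω.mapsTo_Iio hT hw1)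
  have hrate' := (continuousOn_deriv_one_sub_rpow a).comp hωc (hω.mapsTo_Iio hT hw1)
  refine .of_eq_add_integral (c := 0)
    ((hh.continuousOn_mul hrate).add ((hy.continuousOn_mul hrate').mul_continuousOn hwc))
    fun t ht => ?_
  rw [zero_add]
  exact hw.2 t (uIcc_of_le hT ▸ ht)

theorem SolvesLinearizedDamage.eq_integral_mul (hw : SolvesLinearizedDamage T a y h ω w)
    (hω : SolvesDamage T a w1 d0 y ω) (hT : 0 ≤ T) (hw1 : w1 < 1)
    (hy : IntervalIntegrable y volume 0 T) (hh : IntervalIntegrable h volume 0 T)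
    (ht : t ∈ Icc 0 T) :
    w t = (∫ ξ in (0 : ℝ)..t, h ξ) * (1 - ω t) ^ (-a) :=
  linearization_eq_integral_mul (f := fun x => (1 - x) ^ (-a))
    (hω.isIndefiniteIntegral hT hw1 hy) (hω.mapsTo_Iio hT hw1)
    (fun _ hx => hasDerivAt_one_sub_rpow hx a) (continuousOn_deriv_one_sub_rpow a)
    (fun _ hx => one_sub_rpow_ne_zero hx (-a)) (hw.isIndefiniteIntegral hω hT hw1 hy hh)
    (by rw [hw.2 0 (left_mem_Icc.2 hT), intervalIntegral.integral_same]) (uIcc_of_le hT ▸ ht)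

theorem exists_forall_abs_sub_sub_integral_mul_le (a : ℝ) (hT : 0 < T) (hw1 : w1 < 1) :
    ∃ C > 0, ∀ y h : ℝ → ℝ, IntervalIntegrable y volume 0 T →
      MemLp h ⊤ (volume.restrict (Icc 0 T)) →
      ∀ d0 : ℝ, ∀ ω ωh : ℝ → ℝ, SolvesDamage T a w1 d0 y ω →
      SolvesDamage T a w1 d0 (fun t => y t + h t) ωh → ∀ t ∈ Icc 0 T,
      |ωh t - ω t - (∫ ξ in (0 : ℝ)..t, h ξ) * (1 - ω t) ^ (-a)| ≤
        C * essSup (fun t => |h t|) (volume.restrict (Icc 0 T)) ^ 2 := by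
  have hlt : ∀ x ∈ Icc 0 w1, x < 1 := fun x hx => hx.2.trans_lt hw1
  obtain ⟨C, hC, hquad⟩ := exists_forall_abs_sub_sub_mul_integral_inv_le
    (fun x hx => hasDerivAt_one_sub_rpow (hlt x hx) a)
    ((continuousOn_deriv_one_sub_rpow a).mono hlt) fun x hx => one_sub_rpow_ne_zero (hlt x hx) (-a)
  refine ⟨C * T ^ 2, by positivity, fun y h hy hh d0 ω ωh hω hωh t ht => ?_⟩
  have hhI : IntervalIntegrable h volume 0 T := intervalIntegrable_of_memLp_top hT.le hh
  set E := essSup (fun t => |h t|) (volume.restrict (Icc 0 T))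
  have hH : |∫ ξ in (0 : ℝ)..t, h ξ| ≤ E * t := by
    simpa only [sub_zero] using abs_integral_le_essSup_mul hh ht
  have hbound := hquad (ω t) (hω.2.1 t ht) (ωh t) (hωh.2.1 t ht)
  rw [hω.integral_inv_eq hωh hT.le hw1 hy hhI ht, mul_comm] at hbound
  calc |ωh t - ω t - (∫ ξ in (0 : ℝ)..t, h ξ) * (1 - ω t) ^ (-a)|
      ≤ C * |∫ ξ in (0 : ℝ)..t, h ξ| ^ 2 := by rwa [sq_abs]
    _ ≤ C * (E * t) ^ 2 := by gcongr
    _ = C * t ^ 2 * E ^ 2 := by ring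
    _ ≤ C * T ^ 2 * E ^ 2 := by gcongr; exacts [ht.1, ht.2]

theorem damage_solution_map_differentiable_general (T a w1 : ℝ) (hT : 0 < T) (hw1 : w1 < 1) :
    ∃ C > (0 : ℝ), ∀ y h : ℝ → ℝ,
      IntervalIntegrable y volume 0 T → MemLp h ⊤ (volume.restrict (Icc 0 T)) →
      ∀ d0 : ℝ, ∀ ωy ωyh : ℝ → ℝ, SolvesDamage T a w1 d0 y ωy →
      SolvesDamage T a w1 d0 (fun t => y t + h t) ωyh →
      ∃ w : ℝ → ℝ, SolvesLinearizedDamage T a y h ωy w ∧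
        (∀ w' : ℝ → ℝ, SolvesLinearizedDamage T a y h ωy w' → EqOn w' w (Icc 0 T)) ∧
        sSup ((fun t => |ωyh t - ωy t - w t|) '' Icc 0 T) ≤
          C * essSup (fun t => |h t|) (volume.restrict (Icc 0 T)) ^ 2 := by
  obtain ⟨C, hC, hremainder⟩ := exists_forall_abs_sub_sub_integral_mul_le a hT hw1
  refine ⟨C, hC, fun y h hy hh d0 ωy ωyh hωy hωyh => ?_⟩
  have hhI : IntervalIntegrable h volume 0 T := intervalIntegrable_of_memLp_top hT.le hh
  refine ⟨_, hωy.solvesLinearizedDamage hT.le hw1 hy hhI,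
    fun w' hw' t ht => hw'.eq_integral_mul hωy hT.le hw1 hy hhI ht, ?_⟩
  refine csSup_le ((nonempty_Icc.2 hT.le).image _) ?_
  rintro _ ⟨t, ht, rfl⟩
  exact hremainder y h hy hh d0 ωy ωyh hωy hωyh t ht

end Damage

/-- Fréchet differentiability of the source-to-damage map: the linearized
integral equation has a unique continuous solution `w`, and `w` approximates
`ω_{y+h} − ω_y` up to a quadratically small remainder. -/
theorem damage_solution_map_differentiable
    (T a w0 w1 : ℝ) (hT : 0 < T) (ha : 1 ≤ a)
    (hw0 : 0 ≤ w0) (hw01 : w0 ≤ w1) (hw1 : w1 < 1) :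
    ∃ C > (0 : ℝ),
      ∀ y h : ℝ → ℝ,
        AdmissibleSource T a w0 w1 y →
        AdmissibleSource T a w0 w1 (fun t => y t + h t) →
        Measurable h →
        ∀ d0 ∈ Icc (0 : ℝ) w0, ∀ ωy ωyh : ℝ → ℝ,
          SolvesDamage T a w1 d0 y ωy →
          SolvesDamage T a w1 d0 (fun t => y t + h t) ωyh →
          ∃ w : ℝ → ℝ,
            ContinuousOn w (Icc (0 : ℝ) T) ∧
            (∀ t ∈ Icc (0 : ℝ) T,
              w t = ∫ ξ in (0 : ℝ)..t,
                ((1 - ωy ξ) ^ (-a) * h ξ +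
                  a * (1 - ωy ξ) ^ (-(a + 1)) * y ξ * w ξ)) ∧
            (∀ w' : ℝ → ℝ, ContinuousOn w' (Icc (0 : ℝ) T) →
              (∀ t ∈ Icc (0 : ℝ) T,
                w' t = ∫ ξ in (0 : ℝ)..t,
                  ((1 - ωy ξ) ^ (-a) * h ξ +
                    a * (1 - ωy ξ) ^ (-(a + 1)) * y ξ * w' ξ)) →
              ∀ t ∈ Icc (0 : ℝ) T, w' t = w t) ∧
            sSup ((fun t => |ωyh t - ωy t - w t|) '' Icc (0 : ℝ) T) ≤
              C * (essSup (fun t => |h t|) (volume.restrict (Icc (0 : ℝ) T))) ^ 2 := by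
  obtain ⟨C, hC, hmain⟩ := damage_solution_map_differentiable_general T a w1 hT hw1
  refine ⟨C, hC, fun y h hy hyh _ d0 _ ωy ωyh hωy hωyh => ?_⟩
  have hh : MemLp h ⊤ (volume.restrict (Icc 0 T)) :=
    (hyh.memLp_top.sub hy.memLp_top).ae_eq (.of_forall fun t => add_sub_cancel_left (y t) (h t))
  obtain ⟨w, hw, huniq, hle⟩ :=
    hmain y h (intervalIntegrable_of_memLp_top hT.le hy.memLp_top) hh d0 ωy ωyh hωy hωyh
  exact ⟨w, hw.1, hw.2, fun w' hc hw' => huniq w' ⟨hc, hw'⟩, hle⟩
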